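/- In the stationarity setting, the controller parameters are uniquely determined in the following explicit form: Σ12, Σ22, P12, P22 and X12 are invertible, and with K* = (R + B^T P̂ B)^{-1} B^T P̂ A and L* = A Σ̂ C^T (C Σ̂ C^T)^{-1}, one has C_K = −K* Σ12 Σ22^{-1}, B_K = −P22^{-1} P12^T L*, and A_K = −P22^{-1} P12^T (A − B K* − L* C) Σ12 Σ22^{-1}; moreover −P22^{-1} P12^T = X22 X12^{-1}, so that K equals the similarity transformation by T* = X22 X12^{-1} of the observer-based controller (A − B K* − L* C, L*, −K*), i.e., A_K = T* (A − B K* − L* C) (T*)^{-1}, B_K = T* L*, and C_K = −K* (T*)^{-1}. -/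

import Mathlib

/-!
Write `G = P * Acl` and `N = Acl * S`, so that `P * N = G * S`. The three stationarity equations
say `(G S)₂₂ = 0`, `(G S)₂₁ Cᵀ = 0` and `Bᵀ (G S)₁₂ + R C_K S₂₂ = 0`.

Multiplying the second block row of the Lyapunov equation for `P` on the right by the second block
column of `S` and inserting stationarity gives `P₁₂ᵀ S₁₂ + P₂₂ S₂₂ = 0` (`cross_PS`), i.e. the matrices
`U = -P₂₂⁻¹ P₁₂ᵀ` and `V = S₁₂ S₂₂⁻¹` are mutually inverse. Multiplying the second block column of
the Lyapunov equation for `S` on the left by the second block row of `P` gives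
`P₁₂ᵀ S₁₂ + P₂₂ S₂₂ = P₁₂ᵀ X₁₂ + P₂₂ X₂₂` (`cross_PX`), hence `U X₁₂ = X₂₂`, so that `X₁₂` is
invertible and `U = X₂₂ X₁₂⁻¹ = T*`.

The parameters are read off from the stationarity equations: the equation for `(G S)₂₂` gives
`G₂₂ = -G₂₁ V`, and eliminating `A_K` with it turns the other two into linear equations for `B_K` and
`C_K` whose coefficients are `C Ŝ Cᵀ` and `R + Bᵀ P̂ B`, where `Ŝ` and `P̂` are Schur complements;
both coefficients are positive definite.
-/

open Matrix

/-- Closed-loop matrix of the plant `(A, B, C)` interconnected with the dynamic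
output-feedback controller `(A_K, B_K, C_K)`. -/
def Acl {n m d : ℕ} (A : Matrix (Fin n) (Fin n) ℝ) (B : Matrix (Fin n) (Fin m) ℝ)
    (C : Matrix (Fin d) (Fin n) ℝ) (AK : Matrix (Fin n) (Fin n) ℝ)
    (BK : Matrix (Fin n) (Fin d) ℝ) (CK : Matrix (Fin m) (Fin n) ℝ) :
    Matrix (Fin n ⊕ Fin n) (Fin n ⊕ Fin n) ℝ :=
  fromBlocks A (B * CK) (BK * C) AK

/-- Closed-loop weight matrix. -/
def Qcl {n m : ℕ} (Q : Matrix (Fin n) (Fin n) ℝ) (R : Matrix (Fin m) (Fin m) ℝ)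
    (CK : Matrix (Fin m) (Fin n) ℝ) : Matrix (Fin n ⊕ Fin n) (Fin n ⊕ Fin n) ℝ :=
  fromBlocks Q 0 0 (CKᵀ * R * CK)

/-- The Schur complement of a positive definite block matrix is the congruence transform of the
matrix by the block column `(1, -c⁻¹ bᵀ)`, hence positive definite. -/
theorem schur_posDef {n : ℕ} {M : Matrix (Fin n ⊕ Fin n) (Fin n ⊕ Fin n) ℝ}
    {a b c : Matrix (Fin n) (Fin n) ℝ} (hM : M.PosDef) (hMb : M = fromBlocks a b bᵀ c)
    (hc : IsUnit c.det) : (a - b * c⁻¹ * bᵀ).PosDef := by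
  have hinj : Function.Injective (fromRows (1 : Matrix (Fin n) (Fin n) ℝ) (-(c⁻¹ * bᵀ))).mulVec := by
    intro x y h
    have h1 := congrArg (fun f => f ∘ Sum.inl) h
    simpa [fromRows_mulVec] using h1
  have hct : cᵀ = c := by
    have hH := hM.isHermitian
    rw [hMb, isHermitian_fromBlocks_iff] at hH
    simpa [IsHermitian, conjTranspose_eq_transpose_of_trivial] using hH.2.2.2
  have h := hM.conjTranspose_mul_mul_same hinj
  rw [hMb] at h
  convert h using 1
  rw [conjTranspose_eq_transpose_of_trivial, transpose_fromRows,
    fromCols_mul_fromBlocks, fromCols_mul_fromRows]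
  simp [transpose_nonsing_inv, hct, nonsing_inv_mul _ hc, Matrix.mul_assoc, sub_eq_add_neg]

theorem symm_block {n : ℕ} {M : Matrix (Fin n ⊕ Fin n) (Fin n ⊕ Fin n) ℝ} (hM : M.PosDef) :
    M = fromBlocks M.toBlocks₁₁ M.toBlocks₁₂ M.toBlocks₁₂ᵀ M.toBlocks₂₂ := by
  have h : M.toBlocks₁₂ᵀ = M.toBlocks₂₁ := by
    ext i j
    have := hM.isHermitian.apply (Sum.inr i) (Sum.inl j)
    simpa [toBlocks₁₂, toBlocks₂₁] using this
  rw [h, fromBlocks_toBlocks]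

theorem posDef_block₂₂ {n : ℕ} {M : Matrix (Fin n ⊕ Fin n) (Fin n ⊕ Fin n) ℝ} (hM : M.PosDef) :
    M.toBlocks₂₂.PosDef :=
  hM.submatrix Sum.inr_injective

theorem vecMul_injective_of_rank {n d : ℕ} {C : Matrix (Fin d) (Fin n) ℝ} (hC : C.rank = d) :
    Function.Injective C.vecMul := by
  rw [Matrix.vecMul_injective_iff, linearIndependent_iff_card_eq_finrank_span, Set.finrank,
    ← rank_eq_finrank_span_row, hC, Fintype.card_fin]

/-- The Lyapunov equation for `P`, combined with stationarity in `A_K` and `C_K`, makes `P₁₂ᵀ S₁₂`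
and `P₂₂ S₂₂` cancel: the sum is `C_Kᵀ` times the equation for `C_K` plus `A_Kᵀ` times the
equation for `A_K`. -/
theorem cross_PS {n m d : ℕ}
    {A : Matrix (Fin n) (Fin n) ℝ} {B : Matrix (Fin n) (Fin m) ℝ}
    {C : Matrix (Fin d) (Fin n) ℝ}
    {Q : Matrix (Fin n) (Fin n) ℝ} {R : Matrix (Fin m) (Fin m) ℝ}
    {AK : Matrix (Fin n) (Fin n) ℝ} {BK : Matrix (Fin n) (Fin d) ℝ}
    {CK : Matrix (Fin m) (Fin n) ℝ} {P11 P12 P22 S12 S22 : Matrix (Fin n) (Fin n) ℝ}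
    (hLyapP : fromBlocks P11 P12 P12ᵀ P22 = Qcl Q R CK
      + (Acl A B C AK BK CK)ᵀ * fromBlocks P11 P12 P12ᵀ P22 * Acl A B C AK BK CK)
    (hstat1 : Bᵀ * (P11 * A + P12 * (BK * C)) * S12
        + ((R + Bᵀ * P11 * B) * CK + Bᵀ * P12 * AK) * S22 = 0)
    (hstat3 : (P12ᵀ * (B * CK) + P22 * AK) * S22
        + (P12ᵀ * A + P22 * (BK * C)) * S12 = 0) :
    P12ᵀ * S12 + P22 * S22 = 0 := by
  rw [Qcl, Acl, fromBlocks_transpose, Matrix.mul_assoc, fromBlocks_multiply, fromBlocks_multiply,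
    fromBlocks_add, fromBlocks_inj] at hLyapP
  obtain ⟨-, -, h21, h22⟩ := hLyapP
  have e : P12ᵀ * S12 + P22 * S22 =
      CKᵀ * (Bᵀ * (P11 * A + P12 * (BK * C)) * S12
        + ((R + Bᵀ * P11 * B) * CK + Bᵀ * P12 * AK) * S22)
      + AKᵀ * ((P12ᵀ * (B * CK) + P22 * AK) * S22
        + (P12ᵀ * A + P22 * (BK * C)) * S12) := by
    refine (congrArg₂ (· + ·) (congrArg (· * S12) h21) (congrArg (· * S22) h22)).trans ?_
    simp only [transpose_mul, Matrix.mul_add, Matrix.add_mul, Matrix.mul_assoc, zero_add]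
    abel
  rw [e, hstat1, hstat3, Matrix.mul_zero, Matrix.mul_zero, add_zero]

/-- The Lyapunov equation for `S`, combined with stationarity in `A_K` and `B_K`: the second block
row of `P` annihilates the second block column of `S - X = Acl S Aclᵀ`. -/
theorem cross_PX {n m d : ℕ}
    {A : Matrix (Fin n) (Fin n) ℝ} {B : Matrix (Fin n) (Fin m) ℝ}
    {C : Matrix (Fin d) (Fin n) ℝ}
    {AK : Matrix (Fin n) (Fin n) ℝ} {BK : Matrix (Fin n) (Fin d) ℝ}
    {CK : Matrix (Fin m) (Fin n) ℝ}
    {P12 P22 S11 S12 S22 X11 X12 X22 : Matrix (Fin n) (Fin n) ℝ}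
    (hLyapS : fromBlocks S11 S12 S12ᵀ S22 = fromBlocks X11 X12 X12ᵀ X22
      + Acl A B C AK BK CK * fromBlocks S11 S12 S12ᵀ S22 * (Acl A B C AK BK CK)ᵀ)
    (hstat2 : (P12ᵀ * A + P22 * (BK * C)) * S11 * Cᵀ
        + (P12ᵀ * (B * CK) + P22 * AK) * S12ᵀ * Cᵀ = 0)
    (hstat3 : (P12ᵀ * (B * CK) + P22 * AK) * S22
        + (P12ᵀ * A + P22 * (BK * C)) * S12 = 0) :
    P12ᵀ * S12 + P22 * S22 = P12ᵀ * X12 + P22 * X22 := by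
  rw [Acl, fromBlocks_transpose, fromBlocks_multiply, fromBlocks_multiply,
    fromBlocks_add, fromBlocks_inj] at hLyapS
  obtain ⟨-, h12, -, h22⟩ := hLyapS
  have e : P12ᵀ * S12 + P22 * S22 = P12ᵀ * X12 + P22 * X22 +
      (((P12ᵀ * A + P22 * (BK * C)) * S11 * Cᵀ
        + (P12ᵀ * (B * CK) + P22 * AK) * S12ᵀ * Cᵀ) * BKᵀ
      + ((P12ᵀ * (B * CK) + P22 * AK) * S22
        + (P12ᵀ * A + P22 * (BK * C)) * S12) * AKᵀ) := by
    refine (congrArg₂ (· + ·) (congrArg (P12ᵀ * ·) h12) (congrArg (P22 * ·) h22)).trans ?_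
    simp only [transpose_mul, Matrix.mul_add, Matrix.add_mul, Matrix.mul_assoc]
    abel
  rw [e, hstat2, hstat3, Matrix.zero_mul, Matrix.zero_mul, add_zero, add_zero]

theorem stationary_point_structure {n m d : ℕ}
    (A : Matrix (Fin n) (Fin n) ℝ) (B : Matrix (Fin n) (Fin m) ℝ)
    (C : Matrix (Fin d) (Fin n) ℝ)
    (Q : Matrix (Fin n) (Fin n) ℝ) (R : Matrix (Fin m) (Fin m) ℝ)
    (hQ : Q.PosSemidef) (hR : R.PosDef) (hC : C.rank = d)
    (AK : Matrix (Fin n) (Fin n) ℝ) (BK : Matrix (Fin n) (Fin d) ℝ)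
    (CK : Matrix (Fin m) (Fin n) ℝ)
    (X P S : Matrix (Fin n ⊕ Fin n) (Fin n ⊕ Fin n) ℝ)
    (hX : X.PosDef) (hP : P.PosDef) (hS : S.PosDef)
    (hLyapP : P = Qcl Q R CK + (Acl A B C AK BK CK)ᵀ * P * Acl A B C AK BK CK)
    (hLyapS : S = X + Acl A B C AK BK CK * S * (Acl A B C AK BK CK)ᵀ)
    (P11 P12 P22 S11 S12 S22 X11 X12 X22 : Matrix (Fin n) (Fin n) ℝ)
    (hP11 : P11 = P.toBlocks₁₁) (hP12 : P12 = P.toBlocks₁₂) (hP22 : P22 = P.toBlocks₂₂)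
    (hS11 : S11 = S.toBlocks₁₁) (hS12 : S12 = S.toBlocks₁₂) (hS22 : S22 = S.toBlocks₂₂)
    (hX11 : X11 = X.toBlocks₁₁) (hX12 : X12 = X.toBlocks₁₂) (hX22 : X22 = X.toBlocks₂₂)
    (hstat1 : Bᵀ * (P11 * A + P12 * (BK * C)) * S12
        + ((R + Bᵀ * P11 * B) * CK + Bᵀ * P12 * AK) * S22 = 0)
    (hstat2 : (P12ᵀ * A + P22 * (BK * C)) * S11 * Cᵀ
        + (P12ᵀ * (B * CK) + P22 * AK) * S12ᵀ * Cᵀ = 0)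
    (hstat3 : (P12ᵀ * (B * CK) + P22 * AK) * S22
        + (P12ᵀ * A + P22 * (BK * C)) * S12 = 0)
    (Phat Shat : Matrix (Fin n) (Fin n) ℝ)
    (hPhat : Phat = P11 - P12 * P22⁻¹ * P12ᵀ)
    (hShat : Shat = S11 - S12 * S22⁻¹ * S12ᵀ)
    (Kstar : Matrix (Fin m) (Fin n) ℝ)
    (hKstar : Kstar = (R + Bᵀ * Phat * B)⁻¹ * (Bᵀ * Phat * A))
    (Lstar : Matrix (Fin n) (Fin d) ℝ)
    (hLstar : Lstar = A * Shat * Cᵀ * (C * Shat * Cᵀ)⁻¹)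
    (Tstar : Matrix (Fin n) (Fin n) ℝ)
    (hTstar : Tstar = X22 * X12⁻¹) :
    IsUnit S12.det ∧ IsUnit S22.det ∧ IsUnit P12.det ∧ IsUnit P22.det
    ∧ IsUnit X12.det
    ∧ CK = -(Kstar * S12 * S22⁻¹)
    ∧ BK = -(P22⁻¹ * P12ᵀ * Lstar)
    ∧ AK = -(P22⁻¹ * P12ᵀ * (A - B * Kstar - Lstar * C) * (S12 * S22⁻¹))
    ∧ -(P22⁻¹ * P12ᵀ) = Tstar
    ∧ AK = Tstar * (A - B * Kstar - Lstar * C) * Tstar⁻¹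
    ∧ BK = Tstar * Lstar
    ∧ CK = -(Kstar * Tstar⁻¹) := by
  have uP22 : IsUnit P22.det := by
    rw [hP22]; exact (isUnit_iff_isUnit_det _).1 (posDef_block₂₂ hP).isUnit
  have uS22 : IsUnit S22.det := by
    rw [hS22]; exact (isUnit_iff_isUnit_det _).1 (posDef_block₂₂ hS).isUnit
  have uX22 : IsUnit X22.det := by
    rw [hX22]; exact (isUnit_iff_isUnit_det _).1 (posDef_block₂₂ hX).isUnit
  have bP : P = fromBlocks P11 P12 P12ᵀ P22 := by
    rw [hP11, hP12, hP22]; exact symm_block hP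
  have bS : S = fromBlocks S11 S12 S12ᵀ S22 := by
    rw [hS11, hS12, hS22]; exact symm_block hS
  have bX : X = fromBlocks X11 X12 X12ᵀ X22 := by
    rw [hX11, hX12, hX22]; exact symm_block hX
  have pPhat : Phat.PosDef := hPhat ▸ schur_posDef hP bP uP22
  have pShat : Shat.PosDef := hShat ▸ schur_posDef hS bS uS22
  have uK : IsUnit (R + Bᵀ * Phat * B).det := by
    have h := hR.add_posSemidef (pPhat.posSemidef.conjTranspose_mul_mul_same B)
    rw [conjTranspose_eq_transpose_of_trivial] at h
    exact (isUnit_iff_isUnit_det _).1 h.isUnit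
  have uL : IsUnit (C * Shat * Cᵀ).det := by
    have h := pShat.mul_mul_conjTranspose_same (vecMul_injective_of_rank hC)
    rw [conjTranspose_eq_transpose_of_trivial] at h
    exact (isUnit_iff_isUnit_det _).1 h.isUnit
  have hPS : P12ᵀ * S12 + P22 * S22 = 0 :=
    cross_PS (by rw [← bP]; exact hLyapP) hstat1 hstat3
  have hPX : P12ᵀ * X12 + P22 * X22 = 0 := by
    rw [← hPS]
    exact (cross_PX (by rw [← bS, ← bX]; exact hLyapS) hstat2 hstat3).symm
  obtain ⟨U, hU⟩ : ∃ U, U = -(P22⁻¹ * P12ᵀ) := ⟨_, rfl⟩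
  obtain ⟨V, hV⟩ : ∃ V, V = S12 * S22⁻¹ := ⟨_, rfl⟩
  have hPU : P12ᵀ = -(P22 * U) := by
    rw [hU, Matrix.mul_neg, mul_nonsing_inv_cancel_left _ _ uP22, neg_neg]
  have hSV : S12 = V * S22 := by
    rw [hV, nonsing_inv_mul_cancel_right _ _ uS22]
  have cancelP : ∀ {k : ℕ} {Y Z : Matrix (Fin n) (Fin k) ℝ}, P22 * Y = P22 * Z → Y = Z := by
    intro k Y Z h
    have := congrArg (fun W => P22⁻¹ * W) h
    simpa [nonsing_inv_mul_cancel_left _ _ uP22] using this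
  have cancelS : ∀ {k : ℕ} {Y Z : Matrix (Fin k) (Fin n) ℝ}, Y * S22 = Z * S22 → Y = Z := by
    intro k Y Z h
    have := congrArg (fun W => W * S22⁻¹) h
    simpa [mul_nonsing_inv_cancel_right _ _ uS22] using this
  have hUS : U * S12 = S22 := by
    apply cancelP
    rw [hPU, Matrix.neg_mul, neg_add_eq_zero, Matrix.mul_assoc] at hPS
    exact hPS
  have hUX : U * X12 = X22 := by
    apply cancelP
    rw [hPU, Matrix.neg_mul, neg_add_eq_zero, Matrix.mul_assoc] at hPX
    exact hPX
  have hUV : U * V = 1 := by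
    rw [hV, ← Matrix.mul_assoc, hUS, mul_nonsing_inv _ uS22]
  have uU : IsUnit U.det := isUnit_det_of_right_inverse hUV
  have uV : IsUnit V.det := isUnit_det_of_left_inverse hUV
  have uS12 : IsUnit S12.det := by
    rw [hSV, det_mul]; exact uV.mul uS22
  have uP12 : IsUnit P12.det := by
    have h : IsUnit (P12ᵀ).det := by
      rw [hPU, ← Matrix.mul_neg, det_mul]
      exact uP22.mul ((isUnit_iff_isUnit_det _).1 ((isUnit_iff_isUnit_det _).2 uU).neg)
    rwa [det_transpose] at h
  have uX12 : IsUnit X12.det := by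
    rw [← hUX, det_mul] at uX22
    exact isUnit_of_mul_isUnit_right uX22
  have hT : U = Tstar := by
    rw [hTstar, ← hUX, mul_nonsing_inv_cancel_right _ _ uX12]
  have hVinv : Tstar⁻¹ = V := by
    rw [← hT]; exact inv_eq_right_inv hUV
  -- Stationarity in `A_K`, divided by `P₂₂` on the left and by `S₂₂` on the right.
  have hAK : AK = U * (B * CK) + (U * A - BK * C) * V := by
    apply cancelP
    apply cancelS
    rw [hPU, hSV] at hstat3
    rw [← sub_eq_zero, ← hstat3]
    simp only [Matrix.mul_add, Matrix.add_mul, Matrix.mul_sub, Matrix.sub_mul, Matrix.neg_mul,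
      Matrix.mul_assoc]
    abel
  have hShatV : Shat = S11 - V * S12ᵀ := by rw [hShat, hV]
  have hPhatU : Phat = P11 + P12 * U := by
    rw [hPhat, hU, Matrix.mul_neg, sub_eq_add_neg, Matrix.mul_assoc]
  have hBK : BK = U * Lstar := by
    have h : BK * (C * Shat * Cᵀ) = U * (A * Shat * Cᵀ) := by
      apply cancelP
      rw [hPU, hAK] at hstat2
      rw [← sub_eq_zero, ← hstat2, hShatV]
      simp only [Matrix.mul_add, Matrix.add_mul, Matrix.mul_sub, Matrix.sub_mul, Matrix.neg_mul,
        Matrix.mul_assoc]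
      abel
    rw [hLstar, ← Matrix.mul_assoc, ← h, mul_nonsing_inv_cancel_right _ _ uL]
  have hCK : CK = -(Kstar * V) := by
    have h : (R + Bᵀ * Phat * B) * CK = -(Bᵀ * Phat * A * V) := by
      apply cancelS
      rw [hSV, hAK] at hstat1
      rw [← sub_eq_zero, ← hstat1, hPhatU]
      simp only [Matrix.mul_add, Matrix.add_mul, Matrix.mul_sub, Matrix.sub_mul, Matrix.neg_mul,
        Matrix.mul_assoc]
      abel
    rw [hKstar, Matrix.mul_assoc, ← Matrix.mul_neg, ← h, nonsing_inv_mul_cancel_left _ _ uK]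
  have hAK' : AK = U * (A - B * Kstar - Lstar * C) * V := by
    rw [hAK, hBK, hCK]
    simp only [Matrix.mul_sub, Matrix.sub_mul, Matrix.mul_neg, Matrix.mul_assoc]
    abel
  refine ⟨uS12, uS22, uP12, uP22, uX12, ?_, ?_, ?_, ?_, ?_, ?_, ?_⟩
  · rw [hCK, hV, Matrix.mul_assoc]
  · rw [hBK, hU, Matrix.neg_mul]
  · rw [hAK', hU, hV, Matrix.neg_mul, Matrix.neg_mul]
  · rw [← hU, hT]
  · rw [hVinv, ← hT, hAK']
  · rw [← hT, hBK]
  · rw [hVinv, hCK]
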